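/- Let A be a bounded, rationally acyclic cochain complex of finitely generated free abelian groups with a chain automorphism σ satisfying σ² = id. Write A⁺ = A^{σ−1} and A⁻ = A^{σ+1} for the subcomplexes given degreewise by the kernels of σ−1 and σ+1, and A' = A/(A⁺ ⊕ A⁻). Then | Σ_i (−1)^i ( log|H^i(A⁺)[2^∞]| − log|H^i(A⁻)[2^∞]| ) | + | Σ_i (−1)^i log|H^i(A')| | ≤ Σ_i log|H^i(A)[2^∞]| + 2·Σ_i log|H^i(A')|, where for a finite abelian group G, G[2^∞] denotes its 2-primary part and |·| denotes cardinality. -/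

import Mathlib

open CategoryTheory CategoryTheory.Limits MonoidalCategory

/-- The complex `A ⊗ ℚ` obtained by tensoring a cochain complex of abelian groups with ℚ. -/
noncomputable def tensorQ (A : CochainComplex (ModuleCat ℤ) ℤ) :
    CochainComplex (ModuleCat ℤ) ℤ :=
  ((tensorRight (ModuleCat.of ℤ ℚ)).mapHomologicalComplex (ComplexShape.up ℤ)).obj A

/-- The `i`-th cohomology group of a cochain complex of abelian groups. -/
noncomputable def Hgrp (i : ℤ) (X : CochainComplex (ModuleCat ℤ) ℤ) : ModuleCat ℤ :=
  (HomologicalComplex.homologyFunctor (ModuleCat ℤ) (ComplexShape.up ℤ) i).obj X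

/-- The cardinality of the 2-primary part `G[2^∞]` of an abelian group. -/
noncomputable def card2primary (G : ModuleCat ℤ) : ℕ :=
  Nat.card (AddCommGroup.primaryComponent G 2)

theorem aux_card {G1 G2 B H K : Type*} [AddCommGroup G1] [AddCommGroup G2] [AddCommGroup B]
    [AddCommGroup H] [AddCommGroup K] (a : G1 →+ B) (b : G2 →+ B) (f : B →+ H) (d : K →+ B)
    (hinj : ∀ x y, a x + b y = 0 → x = 0 ∧ y = 0)
    (hex : ∀ x, f x = 0 → ∃ k, d k = x)
    [Finite K] [Finite (AddCommGroup.primaryComponent H 2)] :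
    Real.log (Nat.card (AddCommGroup.primaryComponent G1 2)) +
      Real.log (Nat.card (AddCommGroup.primaryComponent G2 2)) ≤
    Real.log (Nat.card K) + Real.log (Nat.card (AddCommGroup.primaryComponent H 2)) := by
  classical
  let P := AddCommGroup.primaryComponent G1 2 × AddCommGroup.primaryComponent G2 2
  have hmem : ∀ p : P, f (a p.1 + b p.2) ∈ AddCommGroup.primaryComponent H 2 := by
    rintro ⟨⟨x, n, hx⟩, ⟨y, m, hy⟩⟩
    have hx' : (2 ^ n) • x = 0 := hx
    have hy' : (2 ^ m) • y = 0 := hy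
    have : (2 ^ (n + m)) • (f (a x + b y)) = 0 := by
      rw [← map_nsmul, nsmul_add, ← map_nsmul, ← map_nsmul]
      rw [pow_add, mul_comm (2^n), mul_smul, hx', mul_comm (2^m), mul_smul, hy']
      simp
    exact ⟨n + m, this⟩
  let g : P → AddCommGroup.primaryComponent H 2 := fun p => ⟨_, hmem p⟩
  have hs : ∀ p : P, ∃ q : P, g q = g p := fun p => ⟨p, rfl⟩
  let s : AddCommGroup.primaryComponent H 2 → P := fun h =>
    if hh : ∃ q : P, g q = h then hh.choose else 0
  have hgs : ∀ p : P, g (s (g p)) = g p := by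
    intro p
    have hh : ∃ q : P, g q = g p := ⟨p, rfl⟩
    simp only [s, dif_pos hh]
    exact hh.choose_spec
  have hk : ∀ p : P, ∃ k, d k = (a p.1 + b p.2) - (a (s (g p)).1 + b (s (g p)).2) := by
    intro p
    apply hex
    have := congrArg Subtype.val (hgs p)
    simp only [g] at this
    rw [map_sub, sub_eq_zero]
    exact this.symm
  choose k hk using hk
  let j : P → K × AddCommGroup.primaryComponent H 2 := fun p => (k p, g p)
  have hj : Function.Injective j := by
    intro p q hpq
    have h1 : k p = k q := congrArg Prod.fst hpq
    have h2 : g p = g q := congrArg Prod.snd hpq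
    have e := hk p
    rw [h1, hk q, h2] at e
    have e2 := sub_left_injective e
    have := hinj (p.1 - q.1) (p.2 - q.2) (by
      rw [map_sub, map_sub, sub_add_sub_comm, sub_eq_zero]; exact e2.symm)
    ext
    · exact sub_eq_zero.1 this.1
    · exact sub_eq_zero.1 this.2
  have hfin : Finite P := Finite.of_injective j hj
  have f1 : Finite (AddCommGroup.primaryComponent G1 2) := Finite.prod_left (α := _)
    (AddCommGroup.primaryComponent G2 2)
  have f2 : Finite (AddCommGroup.primaryComponent G2 2) := Finite.prod_right
    (AddCommGroup.primaryComponent G1 2)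
  have hc := Nat.card_le_card_of_injective j hj
  rw [Nat.card_prod, Nat.card_prod] at hc
  have p1 := Nat.card_pos (α := AddCommGroup.primaryComponent G1 2)
  have p2 := Nat.card_pos (α := AddCommGroup.primaryComponent G2 2)
  have p3 := Nat.card_pos (α := AddCommGroup.primaryComponent H 2)
  have p4 := Nat.card_pos (α := K)
  rw [← Real.log_mul (by positivity) (by positivity), ← Real.log_mul (by positivity) (by positivity)]
  apply Real.log_le_log (by positivity)
  exact_mod_cast hc

theorem aux_fin_primary (H : Type*) [AddCommGroup H] [inst : Module ℤ H] [Module.Finite ℤ H] :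
    Finite (AddCommGroup.primaryComponent H 2) := by
  obtain rfl : inst = AddCommGroup.toIntModule H := Subsingleton.elim _ _
  let M : Submodule ℤ H := AddSubgroup.toIntSubmodule (AddCommGroup.primaryComponent H 2)
  have : Finite M := by
    apply Module.finite_of_fg_torsion
    rintro ⟨x, n, hx⟩
    refine ⟨⟨2 ^ n, mem_nonZeroDivisors_of_ne_zero (by positivity)⟩, ?_⟩
    apply Subtype.ext
    change ((2:ℤ) ^ n) • x = 0
    rw [← hx, ← natCast_zsmul]; simp
  exact this

theorem aux_fin_two (H : Type*) [AddCommGroup H] [inst : Module ℤ H] [Module.Finite ℤ H]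
    (h2 : ∀ x : H, x + x = 0) : Finite H := by
  obtain rfl : inst = AddCommGroup.toIntModule H := Subsingleton.elim _ _
  apply Module.finite_of_fg_torsion
  intro x
  exact ⟨⟨2, mem_nonZeroDivisors_of_ne_zero (by norm_num)⟩, (two_smul ℤ x).trans (h2 x)⟩

theorem aux_Hfin (X : CochainComplex (ModuleCat ℤ) ℤ) (i : ℤ) (h : Module.Finite ℤ (X.X i)) :
    Module.Finite ℤ (Hgrp i X) := by
  have h1 : Module.Finite ℤ (X.cycles i) :=
    Module.Finite.of_injective (X.iCycles i).hom ((ModuleCat.mono_iff_injective _).1 inferInstance)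
  exact Module.Finite.of_surjective (X.homologyπ i).hom
    ((ModuleCat.epi_iff_surjective _).1 inferInstance)

theorem aux_Hzero (X : CochainComplex (ModuleCat ℤ) ℤ) (i : ℤ) (h : IsZero (X.X i)) :
    Subsingleton (Hgrp i X) := by
  have h1 : IsZero (X.cycles i) := h.of_mono (X.iCycles i)
  have h2 : IsZero (Hgrp i X) := (IsZero.of_epi (X.homologyπ i) h1 : IsZero (X.homology i))
  exact ModuleCat.subsingleton_of_isZero h2

theorem aux_log2 (X : CochainComplex (ModuleCat ℤ) ℤ) (i : ℤ) (h : IsZero (X.X i)) :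
    Real.log (card2primary (Hgrp i X)) = 0 := by
  have := aux_Hzero X i h
  have : Nat.card (AddCommGroup.primaryComponent (Hgrp i X) 2) = 1 :=
    Nat.card_eq_one_iff_unique.2 ⟨inferInstance, inferInstance⟩
  rw [card2primary, this]; simp

theorem aux_log (X : CochainComplex (ModuleCat ℤ) ℤ) (i : ℤ) (h : IsZero (X.X i)) :
    Real.log (Nat.card (Hgrp i X)) = 0 := by
  have := aux_Hzero X i h
  have : Nat.card (Hgrp i X) = 1 :=
    Nat.card_eq_one_iff_unique.2 ⟨inferInstance, inferInstance⟩
  rw [this]; simp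

theorem aux_main {P M X₂ X₃ : CochainComplex (ModuleCat ℤ) ℤ} (f : P ⊞ M ⟶ X₂) (g : X₂ ⟶ X₃)
    (w : f ≫ g = 0) (hS : (ShortComplex.mk f g w).ShortExact) (i j : ℤ) (hij : i + 1 = j)
    [Finite (Hgrp i X₃)] [Module.Finite ℤ (X₂.X j)] :
    Real.log (card2primary (Hgrp j P)) + Real.log (card2primary (Hgrp j M)) ≤
      Real.log (Nat.card (Hgrp i X₃)) + Real.log (card2primary (Hgrp j X₂)) := by
  have := aux_Hfin X₂ j inferInstance
  have := aux_fin_primary (Hgrp j X₂)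
  have hex := hS.homology_exact₁ i j hij
  rw [ShortComplex.moduleCat_exact_iff] at hex
  let F := HomologicalComplex.homologyFunctor (ModuleCat ℤ) (ComplexShape.up ℤ) j
  let a : Hgrp j P →+ Hgrp j (P ⊞ M) := (F.map biprod.inl).hom.toAddMonoidHom
  let b : Hgrp j M →+ Hgrp j (P ⊞ M) := (F.map biprod.inr).hom.toAddMonoidHom
  let p : Hgrp j (P ⊞ M) →+ Hgrp j P := (F.map biprod.fst).hom.toAddMonoidHom
  let q : Hgrp j (P ⊞ M) →+ Hgrp j M := (F.map biprod.snd).hom.toAddMonoidHom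
  have pa : ∀ x, p (a x) = x := fun x => by
    have : F.map (biprod.inl : P ⟶ P ⊞ M) ≫ F.map biprod.fst = 𝟙 _ := by
      rw [← F.map_comp, biprod.inl_fst, F.map_id]
    exact congrArg (fun t => t.hom x) this
  have qb : ∀ x, q (b x) = x := fun x => by
    have : F.map (biprod.inr : M ⟶ P ⊞ M) ≫ F.map biprod.snd = 𝟙 _ := by
      rw [← F.map_comp, biprod.inr_snd, F.map_id]
    exact congrArg (fun t => t.hom x) this
  have pb : ∀ x, p (b x) = 0 := fun x => by
    have : F.map (biprod.inr : M ⟶ P ⊞ M) ≫ F.map biprod.fst = 0 := by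
      rw [← F.map_comp, biprod.inr_fst, F.map_zero]
    exact congrArg (fun t => t.hom x) this
  have qa : ∀ x, q (a x) = 0 := fun x => by
    have : F.map (biprod.inl : P ⟶ P ⊞ M) ≫ F.map biprod.snd = 0 := by
      rw [← F.map_comp, biprod.inl_snd, F.map_zero]
    exact congrArg (fun t => t.hom x) this
  refine aux_card (K := Hgrp i X₃) (H := Hgrp j X₂) a b (F.map f).hom.toAddMonoidHom
    (hS.δ i j hij).hom.toAddMonoidHom ?_ ?_
  · intro x y h
    have h1 := congrArg p h
    have h2 := congrArg q h
    rw [map_add, pa, pb, map_zero, add_zero] at h1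
    rw [map_add, qa, qb, map_zero, zero_add] at h2
    exact ⟨h1, h2⟩
  · intro x hx
    exact hex x hx

/-- Let A be a bounded, rationally acyclic cochain complex of finitely
generated free abelian groups with a chain automorphism σ satisfying σ² = id.  Write
A⁺ = A^{σ−1}, A⁻ = A^{σ+1} (degreewise kernels of σ−1 and σ+1) and A' = A/(A⁺ ⊕ A⁻).  Then
|Σ_i (−1)^i (log|H^i(A⁺)[2^∞]| − log|H^i(A⁻)[2^∞]|)| + |Σ_i (−1)^i log|H^i(A')||
  ≤ Σ_i log|H^i(A)[2^∞]| + 2·Σ_i log|H^i(A')|. -/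
theorem stmt_8 (A : CochainComplex (ModuleCat ℤ) ℤ)
    (hAbd : ∃ N : ℕ, ∀ i : ℤ, (N : ℤ) ≤ |i| → IsZero (A.X i))
    (hfree : ∀ i : ℤ, Module.Free ℤ (A.X i)) (hfg : ∀ i : ℤ, Module.Finite ℤ (A.X i))
    (hacyc : ∀ i : ℤ, IsZero (Hgrp i (tensorQ A)))
    (σ : End A) (hσ : σ ^ 2 = 1) :
    |∑ᶠ i : ℤ, (-1 : ℝ) ^ i *
        (Real.log (card2primary (Hgrp i (kernel (σ - 1)))) -
          Real.log (card2primary (Hgrp i (kernel (σ + 1)))))| +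
      |∑ᶠ i : ℤ, (-1 : ℝ) ^ i *
        Real.log (Nat.card
          (Hgrp i (cokernel (biprod.desc (kernel.ι (σ - 1)) (kernel.ι (σ + 1))))))| ≤
    (∑ᶠ i : ℤ, Real.log (card2primary (Hgrp i A))) +
      2 * ∑ᶠ i : ℤ, Real.log (Nat.card
        (Hgrp i (cokernel (biprod.desc (kernel.ι (σ - 1)) (kernel.ι (σ + 1)))))) := by
  obtain ⟨N, hN⟩ := hAbd
  let τ : A ⟶ A := σ
  have hsq : τ ≫ τ = 𝟙 A := by
    rw [pow_two] at hσ; exact hσ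
  have hm : ∀ {X : CochainComplex (ModuleCat ℤ) ℤ} (t : X ⟶ A),
      t ≫ (σ - 1 : End A) = t ≫ τ - t := by
    intro X t
    exact (Preadditive.comp_sub _ _ _).trans (by rw [End.one_def, Category.comp_id])
  have hp : ∀ {X : CochainComplex (ModuleCat ℤ) ℤ} (t : X ⟶ A),
      t ≫ (σ + 1 : End A) = t ≫ τ + t := by
    intro X t
    exact (Preadditive.comp_add _ _ _ _ _ _).trans (by rw [End.one_def, Category.comp_id])
  -- torsion-freeness
  have htf : ∀ {X : CochainComplex (ModuleCat ℤ) ℤ} (t : X ⟶ A), t + t = 0 → t = 0 := by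
    intro X t ht
    ext i x
    have h1 : (t + t).f i = 0 := by rw [ht]; rfl
    have h2 : (t.f i).hom x + (t.f i).hom x = 0 := congrArg (fun u => u.hom x) h1
    have h2 := (two_smul ℤ ((t.f i).hom x)).trans h2
    have := hfree i
    have h3 := (smul_eq_zero.1 h2).resolve_left (by norm_num)
    exact h3
  set ip := kernel.ι (σ - 1) with hip
  set im := kernel.ι (σ + 1) with him
  have hmono : Mono (biprod.desc ip im) := by
    apply Preadditive.mono_of_cancel_zero
    intro X f hf
    have h1 : f = (f ≫ biprod.fst) ≫ biprod.inl + (f ≫ biprod.snd) ≫ biprod.inr := by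
      simp only [Category.assoc, ← Preadditive.comp_add, biprod.total, Category.comp_id]
    have ha := (hm ip).symm.trans (kernel.condition _)
    have hb := (hp im).symm.trans (kernel.condition _)
    rw [sub_eq_zero] at ha
    have hb := eq_neg_of_add_eq_zero_left hb
    have h2 : (f ≫ biprod.fst) ≫ ip + (f ≫ biprod.snd) ≫ im = 0 := by
      rw [h1] at hf
      simpa using hf
    have h3 : (f ≫ biprod.fst) ≫ ip - (f ≫ biprod.snd) ≫ im = 0 := by
      have := congrArg (fun t => t ≫ τ) h2
      simp only [Preadditive.add_comp, Category.assoc, ha, hb, zero_comp, Preadditive.comp_neg] at this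
      simpa [sub_eq_add_neg] using this
    have h4 : (f ≫ biprod.fst) ≫ ip = 0 := by
      apply htf
      rw [sub_eq_zero] at h3
      nth_rewrite 2 [h3]; exact h2
    have h5 : (f ≫ biprod.snd) ≫ im = 0 := by
      rw [h4, zero_add] at h2; exact h2
    have h6 : f ≫ biprod.fst = 0 := (cancel_mono ip).1 (by rw [h4, zero_comp])
    have h7 : f ≫ biprod.snd = 0 := (cancel_mono im).1 (by rw [h5, zero_comp])
    rw [h1, h6, h7]; simp
  let S : ShortComplex (CochainComplex (ModuleCat ℤ) ℤ) :=
    ShortComplex.mk (biprod.desc ip im) (cokernel.π _) (cokernel.condition _)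
  have hS : S.ShortExact :=
    { exact := ShortComplex.exact_cokernel _
      mono_f := hmono
      epi_g := inferInstanceAs (Epi (cokernel.π _)) }
  let C := cokernel (biprod.desc ip im)
  let π : A ⟶ C := cokernel.π (biprod.desc ip im)
  have hπ : Epi π := inferInstanceAs (Epi (cokernel.π _))
  have hπi : ∀ i, Epi (π.f i) := fun i => inferInstance
  have hCfg : ∀ i, Module.Finite ℤ (C.X i) := fun i =>
    Module.Finite.of_surjective (π.f i).hom ((ModuleCat.epi_iff_surjective _).1 (hπi i))
  have h2C : (𝟙 C + 𝟙 C) = 0 := by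
    rw [← cancel_epi π]
    have e1 : ip ≫ π = 0 := by
      have := biprod.inl_desc_assoc ip im π
      rw [← this, cokernel.condition, comp_zero]
    have e2 : im ≫ π = 0 := by
      have := biprod.inr_desc_assoc ip im π
      rw [← this, cokernel.condition, comp_zero]
    have k1 : (τ + 𝟙 A) ≫ π = 0 := by
      have w : (τ + 𝟙 A) ≫ (σ - 1 : End A) = 0 := by
        rw [hm, Preadditive.add_comp, hsq, Category.id_comp]; abel
      have : kernel.lift (σ - 1) _ w ≫ ip = _ := kernel.lift_ι _ _ _
      rw [← this, Category.assoc, e1, comp_zero]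
    have k2 : (τ - 𝟙 A) ≫ π = 0 := by
      have w : (τ - 𝟙 A) ≫ (σ + 1 : End A) = 0 := by
        rw [hp, Preadditive.sub_comp, hsq, Category.id_comp]; abel
      have : kernel.lift (σ + 1) _ w ≫ im = _ := kernel.lift_ι _ _ _
      rw [← this, Category.assoc, e2, comp_zero]
    rw [Preadditive.add_comp, Category.id_comp] at k1
    rw [Preadditive.sub_comp, Category.id_comp, sub_eq_zero] at k2
    rw [k2] at k1
    simpa using k1
  have hCfin : ∀ i, Finite (Hgrp i C) := by
    intro i
    have := aux_Hfin C i (hCfg i)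
    apply aux_fin_two
    intro x
    let F := HomologicalComplex.homologyFunctor (ModuleCat ℤ) (ComplexShape.up ℤ) i
    have h : 𝟙 (F.obj C) + 𝟙 (F.obj C) = 0 := by
      rw [← F.map_id, ← F.map_add, h2C, F.map_zero]
    exact congrArg (fun t => t.hom x) h
  have key : ∀ i j : ℤ, i + 1 = j →
      Real.log (card2primary (Hgrp j (kernel (σ - 1)))) +
        Real.log (card2primary (Hgrp j (kernel (σ + 1)))) ≤
      Real.log (Nat.card (Hgrp i C)) + Real.log (card2primary (Hgrp j A)) := by
    intro i j hij
    have := hCfin i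
    have := hfg j
    exact aux_main _ _ _ hS i j hij
  -- vanishing
  have hCz : ∀ i : ℤ, (N : ℤ) ≤ |i| → IsZero (C.X i) := fun i hi =>
    IsZero.of_epi (π.f i) (hN i hi)
  have hPz : ∀ i : ℤ, (N : ℤ) ≤ |i| → IsZero ((kernel (σ - 1)).X i) := fun i hi =>
    (hN i hi).of_mono (ip.f i)
  have hMz : ∀ i : ℤ, (N : ℤ) ≤ |i| → IsZero ((kernel (σ + 1)).X i) := fun i hi =>
    (hN i hi).of_mono (im.f i)
  change _ + |∑ᶠ i : ℤ, (-1 : ℝ) ^ i * Real.log (Nat.card (Hgrp i C))| ≤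
    _ + 2 * ∑ᶠ i : ℤ, Real.log (Nat.card (Hgrp i C))
  generalize hu : (fun i : ℤ => Real.log (card2primary (Hgrp i (kernel (σ - 1))))) = u
  generalize hv : (fun i : ℤ => Real.log (card2primary (Hgrp i (kernel (σ + 1))))) = v
  generalize hw : (fun i : ℤ => Real.log (card2primary (Hgrp i A))) = w
  generalize hc : (fun i : ℤ => Real.log (Nat.card (Hgrp i C))) = c
  have hu' := fun i => congrFun hu i
  have hv' := fun i => congrFun hv i
  have hw' := fun i => congrFun hw i
  have hc' := fun i => congrFun hc i
  simp only [hu', hv', hw', hc'] at key ⊢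
  have u0 : ∀ i, 0 ≤ u i := fun i => by rw [← hu']; exact Real.log_natCast_nonneg _
  have v0 : ∀ i, 0 ≤ v i := fun i => by rw [← hv']; exact Real.log_natCast_nonneg _
  have c0 : ∀ i, 0 ≤ c i := fun i => by rw [← hc']; exact Real.log_natCast_nonneg _
  have uz : ∀ i : ℤ, (N : ℤ) ≤ |i| → u i = 0 := fun i hi => by
    rw [← hu']; exact aux_log2 _ _ (hPz i hi)
  have vz : ∀ i : ℤ, (N : ℤ) ≤ |i| → v i = 0 := fun i hi => by
    rw [← hv']; exact aux_log2 _ _ (hMz i hi)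
  have wz : ∀ i : ℤ, (N : ℤ) ≤ |i| → w i = 0 := fun i hi => by
    rw [← hw']; exact aux_log2 _ _ (hN i hi)
  have cz : ∀ i : ℤ, (N : ℤ) ≤ |i| → c i = 0 := fun i hi => by
    rw [← hc']; exact aux_log _ _ (hCz i hi)
  let I : Finset ℤ := Finset.Icc (-(N : ℤ) - 1) (N + 1)
  have hI : ∀ f : ℤ → ℝ, (∀ i : ℤ, (N : ℤ) + 1 ≤ |i| → f i = 0) →
      ∑ᶠ i, f i = ∑ i ∈ I, f i := by
    intro f hf
    apply finsum_eq_sum_of_support_subset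
    intro i hi
    by_contra hni
    apply hi
    apply hf
    simp only [I, Finset.coe_Icc, Set.mem_Icc] at hni
    rw [le_abs]
    omega
  have hshift : ∑ᶠ i, c (i - 1) = ∑ᶠ i, c i :=
    finsum_comp_equiv (Equiv.subRight (1 : ℤ)) (f := c)
  have hab : ∀ (i : ℤ) (x : ℝ), |(-1 : ℝ) ^ i * x| = |x| := by
    intro i x
    rw [abs_mul, abs_zpow]; simp
  have b1 : |∑ᶠ i : ℤ, (-1 : ℝ) ^ i * (u i - v i)| ≤ ∑ᶠ i, c i + ∑ᶠ i, w i := by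
    rw [← hshift, hI _ (fun i hi => by rw [uz i (by omega), vz i (by omega)]; simp),
      hI (fun i => c (i - 1)) (fun i hi => cz _ (by rw [le_abs] at hi ⊢; omega)),
      hI w (fun i hi => wz i (by omega)), ← Finset.sum_add_distrib]
    refine (Finset.abs_sum_le_sum_abs _ _).trans (Finset.sum_le_sum fun i _ => ?_)
    rw [hab]
    have := key (i - 1) i (by omega)
    have := u0 i
    have := v0 i
    rw [abs_le]; constructor <;> linarith
  have b2 : |∑ᶠ i : ℤ, (-1 : ℝ) ^ i * c i| ≤ ∑ᶠ i, c i := by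
    rw [hI _ (fun i hi => by rw [cz i (by omega)]; simp),
      hI c (fun i hi => cz i (by omega))]
    refine (Finset.abs_sum_le_sum_abs _ _).trans (Finset.sum_le_sum fun i _ => ?_)
    rw [hab, abs_of_nonneg (c0 i)]
  linarith
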